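/- Let X be an infinite-dimensional reflexive real Banach space with topological dual X*, and let T : X → X* be a continuous potential operator. Assume that T is closed, that T is not monotone, that the functional J_T is sequentially weakly lower semicontinuous, and that J_T + φ is coercive for every φ ∈ X*. Suppose moreover that there exists a closed σ-compact set B ⊂ X such that the restriction of T to X \ B is of class C¹. Then the set S̃ of all points x ∈ X \ B at which the Fréchet derivative T'(x) ∈ L(X, X*) is not invertible is not σ-compact. -/

import Mathlib

open Filter Topology Set NormedSpace

theorem aux_dense_compl {E : Type*} [NormedAddCommGroup E] [NormedSpace ℝ E] [CompleteSpace E]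
    (hdim : ¬ FiniteDimensional ℝ E) {S : Set E} (hS : IsSigmaCompact S) : Dense Sᶜ := by
  obtain ⟨K, hK, rfl⟩ := hS
  rw [compl_iUnion]
  refine dense_iInter_of_isOpen (fun n => (hK n).isClosed.isOpen_compl) fun n => ?_
  rw [← interior_eq_empty_iff_dense_compl]
  by_contra hne
  obtain ⟨x, hx⟩ := nonempty_iff_ne_empty.mpr hne
  obtain ⟨r, hr, hb⟩ := Metric.nhds_basis_closedBall.mem_iff.mp (mem_interior_iff_mem_nhds.mp hx)
  exact hdim (FiniteDimensional.of_isCompact_closedBall ℝ hr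
    ((hK n).of_isClosed_subset Metric.isClosed_closedBall hb))

theorem aux_perturb {E : Type*} [NormedAddCommGroup E] [NormedSpace ℝ E] [CompleteSpace E]
    (hdim : ¬ FiniteDimensional ℝ E) {S : Set E} (hS : IsSigmaCompact S)
    {P : Type*} [TopologicalSpace P] [CompactSpace P] (h : P → E) (hh : Continuous h)
    (b : P → ℝ) (hb : Continuous b) (hb0 : ∀ p, b p = 0 → h p ∉ S) :
    ∃ v : E, ∀ p, h p + b p • v ∉ S := by
  obtain ⟨K, hK, rfl⟩ := hS
  let G : P × E → E := fun q => (b q.1)⁻¹ • (q.2 - h q.1)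
  have hbad : IsSigmaCompact (⋃ i : ℕ × ℕ,
      G '' ({p | (1:ℝ) / (i.1 + 1) ≤ |b p|} ×ˢ K i.2)) := by
    refine isSigmaCompact_iUnion_of_isCompact _ fun i => ?_
    refine IsCompact.image_of_continuousOn
      ((isClosed_le continuous_const hb.abs).isCompact.prod (hK _)) ?_
    refine ContinuousOn.smul (ContinuousOn.inv₀ (by fun_prop) ?_) (by fun_prop)
    rintro ⟨p, k⟩ ⟨hp, -⟩ h0
    have : (1:ℝ) / (i.1 + 1) ≤ |b p| := hp
    have h0' : b p = 0 := h0
    rw [h0', abs_zero] at this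
    have : (0:ℝ) < 1 / (i.1 + 1) := by positivity
    linarith
  obtain ⟨v, hv⟩ := (aux_dense_compl hdim hbad).nonempty
  refine ⟨v, fun p hp => ?_⟩
  by_cases h0 : b p = 0
  · exact hb0 p h0 (by simpa [h0] using hp)
  · obtain ⟨n, hn⟩ := mem_iUnion.mp hp
    obtain ⟨m, hm⟩ := exists_nat_one_div_lt (abs_pos.mpr h0)
    refine hv (mem_iUnion.mpr ⟨(m, n), (p, h p + b p • v), ⟨hm.le, hn⟩, ?_⟩)
    simp [G, smul_smul, h0]

theorem aux_fiber_compact {X Y : Type*} [MetricSpace X] [MetricSpace Y] (T : X → Y)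
    (hT : Continuous T) (hc : ∀ C : Set X, IsClosed C → IsClosed (T '' C)) (y : Y)
    (hint : interior (T ⁻¹' {y}) = ∅) : IsCompact (T ⁻¹' {y}) := by
  have hFc : IsClosed (T ⁻¹' {y}) := isClosed_singleton.preimage hT
  rw [isCompact_iff_isSeqCompact]
  intro x hx
  have hz : ∀ n : ℕ, ∃ z : X, dist z (x n) < 1 / ((n : ℝ) + 1) ∧
      dist (T z) y < 1 / ((n : ℝ) + 1) ∧ T z ≠ y := by
    intro n
    have hpos : (0:ℝ) < 1 / ((n : ℝ) + 1) := by positivity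
    have h1 : {z | dist z (x n) < 1 / ((n : ℝ) + 1) ∧ dist (T z) y < 1 / ((n : ℝ) + 1)}
        ∈ 𝓝 (x n) := by
      refine inter_mem (Metric.ball_mem_nhds _ hpos) ?_
      have hTx : T (x n) = y := hx n
      exact hT.continuousAt.preimage_mem_nhds (by rw [hTx]; exact Metric.ball_mem_nhds _ hpos)
    by_contra hcon
    push Not at hcon
    have : x n ∈ interior (T ⁻¹' {y}) :=
      mem_interior_iff_mem_nhds.mpr (mem_of_superset h1 fun z hz => hcon z hz.1 hz.2)
    rw [hint] at this
    exact this
  choose z hz1 hz2 hz3 using hz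
  have hTz : Tendsto (fun n => T (z n)) atTop (𝓝 y) := by
    rw [tendsto_iff_dist_tendsto_zero]
    exact squeeze_zero (fun _ => dist_nonneg) (fun n => (hz2 n).le)
      tendsto_one_div_add_atTop_nhds_zero_nat
  obtain ⟨a, ha, hay⟩ : y ∈ T '' closure (range z) :=
    (hc _ isClosed_closure).mem_of_tendsto hTz
      (Eventually.of_forall fun n => mem_image_of_mem _ (subset_closure (mem_range_self n)))
  have hcl : MapClusterPt a atTop z := by
    rw [mapClusterPt_iff_frequently]
    intro s hs
    rw [frequently_atTop]
    intro N
    have hfin : (z '' (Iio N)).Finite := (finite_Iio N).image z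
    have hna : a ∉ z '' (Iio N) := by
      rintro ⟨n, -, rfl⟩
      exact hz3 n hay
    have hs' : s ∩ (z '' (Iio N))ᶜ ∈ 𝓝 a := inter_mem hs (hfin.isClosed.isOpen_compl.mem_nhds hna)
    obtain ⟨_, ⟨hws, hwn⟩, n, rfl⟩ := mem_closure_iff_nhds.mp ha _ hs'
    refine ⟨n, ?_, hws⟩
    by_contra hlt
    exact hwn ⟨n, not_le.mp hlt, rfl⟩
  obtain ⟨ψ, hψ, hlim⟩ := MapClusterPt.tendsto_subseq hcl
  refine ⟨a, hay, ψ, hψ, ?_⟩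
  refine hlim.congr_dist ?_
  refine squeeze_zero (fun _ => dist_nonneg) (fun n => (hz1 (ψ n)).le) ?_
  exact tendsto_one_div_add_atTop_nhds_zero_nat.comp hψ.tendsto_atTop

theorem aux_covering_inj {X Y : Type*} [NormedAddCommGroup X] [NormedSpace ℝ X] [CompleteSpace X]
    [NormedAddCommGroup Y] [NormedSpace ℝ Y] [CompleteSpace Y]
    (hX : ¬ FiniteDimensional ℝ X) (hY : ¬ FiniteDimensional ℝ Y) (T : X → Y) (hT : Continuous T)
    {K : Set Y} (hK : IsSigmaCompact K) (hKX : IsSigmaCompact (T ⁻¹' K))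
    (hcov : IsCoveringMapOn T Kᶜ) {x y : X} (hx : T x ∉ K) (hxy : T x = T y) : x = y := by
  have cov := hcov.isCoveringMap_restrictPreimage
  obtain ⟨v, hv⟩ := aux_perturb hX hKX (P := unitInterval)
    (fun t => (1 - (t:ℝ)) • x + (t:ℝ) • y) (by fun_prop) (fun t => (t:ℝ) * (1 - t)) (by fun_prop)
    (by
      intro t ht
      rcases mul_eq_zero.mp ht with h | h
      · simpa [h] using hx
      · have : (t:ℝ) = 1 := by linarith
        simpa [this, ← hxy] using hx)
  let c : C(unitInterval, T ⁻¹' Kᶜ) :=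
    ⟨fun t => ⟨(1 - (t:ℝ)) • x + (t:ℝ) • y + ((t:ℝ) * (1 - t)) • v, hv t⟩, by fun_prop⟩
  have hc0 : c 0 = ⟨x, hx⟩ := by ext; simp [c]
  have hc1 : c 1 = ⟨y, by rw [mem_preimage, ← hxy]; exact hx⟩ := by ext; simp [c]
  obtain ⟨w, hw⟩ := aux_perturb hY hK (P := unitInterval × unitInterval)
    (fun q => (1 - (q.1:ℝ)) • T (c q.2 : X) + (q.1:ℝ) • T x) (by fun_prop)
    (fun q => (q.1:ℝ) * (1 - q.1) * ((q.2:ℝ) * (1 - q.2))) (by fun_prop)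
    (by
      rintro ⟨s, t⟩ ht
      rcases mul_eq_zero.mp ht with h | h
      · rcases mul_eq_zero.mp h with h | h
        · have h' : (s:ℝ) = 0 := h
          have h2 : T (c t : X) ∉ K := (c t).2
          simpa [h'] using h2
        · have : (s:ℝ) = 1 := by dsimp only at h; linarith
          simpa [this] using hx
      · have : T (c t : X) = T x := by
          rcases mul_eq_zero.mp h with h | h
          · have : t = 0 := Subtype.ext h
            rw [this, hc0]
          · have : t = 1 := Subtype.ext (by
              change (t:ℝ) = 1
              dsimp only at h
              linarith)
            rw [this, hc1]; exact hxy.symm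
        simp only [this]
        rw [← add_smul]
        simpa using hx)
  let p := Kᶜ.restrictPreimage T
  let γ₀ : C(unitInterval, (Kᶜ : Set Y)) := ContinuousMap.comp ⟨p, cov.continuous⟩ c
  let γ₁ : C(unitInterval, (Kᶜ : Set Y)) := .const _ ⟨T x, hx⟩
  have hend : ∀ t : unitInterval, t ∈ ({0, 1} : Set unitInterval) → T (c t : X) = T x := by
    rintro t (rfl | rfl)
    · rw [hc0]
    · rw [hc1]; exact hxy.symm
  have H : γ₀.HomotopyRel γ₁ {0, 1} :=
    { toFun := fun q => ⟨_, hw q⟩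
      continuous_toFun := by fun_prop
      map_zero_left := by intro t; ext; simp [γ₀, p]
      map_one_left := by intro t; ext; simp [γ₁]
      prop' := by
        intro s t ht
        have h1 := hend t ht
        have h2 : (t:ℝ) * (1 - t) = 0 := by
          rcases ht with rfl | rfl <;> simp
        apply Subtype.ext
        change (1 - (s:ℝ)) • T (c t : X) + (s:ℝ) • T x +
          ((s:ℝ) * (1 - s) * ((t:ℝ) * (1 - t))) • w = T (c t : X)
        rw [h1, h2, ← add_smul]
        simp }
  have h0 : γ₀ 0 = p ⟨x, hx⟩ := by simp [γ₀, hc0]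
  have h1 : γ₁ 0 = p ⟨x, hx⟩ := rfl
  have key := cov.liftPath_apply_one_eq_of_homotopicRel ⟨H⟩ ⟨x, hx⟩ h0 h1
  have e0 : c = cov.liftPath γ₀ ⟨x, hx⟩ h0 := (cov.eq_liftPath_iff' _).mpr ⟨rfl, hc0⟩
  have e1 : ContinuousMap.const _ ⟨x, hx⟩ = cov.liftPath γ₁ ⟨x, hx⟩ h1 :=
    (cov.eq_liftPath_iff' _).mpr ⟨rfl, rfl⟩
  rw [← e0, ← e1, hc1] at key
  exact (congrArg Subtype.val key).symm

theorem aux_weak_subseq {X : Type*} [NormedAddCommGroup X] [NormedSpace ℝ X]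
    (hrefl : Function.Surjective (inclusionInDoubleDual ℝ X)) (u : ℕ → X) (R : ℝ)
    (hu : ∀ n, ‖u n‖ ≤ R) :
    ∃ (x : X) (ψ : ℕ → ℕ), StrictMono ψ ∧
      ∀ φ : StrongDual ℝ X, Tendsto (fun n => φ (u (ψ n))) atTop (𝓝 (φ x)) := by
  let ι := toWeakSpace ℝ X
  let S : Set (WeakSpace ℝ X) := range fun n => ι (u n)
  have hcont : ∀ φ : StrongDual ℝ X, Continuous fun w : WeakSpace ℝ X => φ (ι.symm w) := fun φ =>
    WeakBilin.eval_continuous (topDualPairing ℝ X).flip φ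
  have hS : IsCompact (closure S) := by
    apply isCompact_closure_of_isBounded
    · refine (Metric.isBounded_closedBall (x := (0:X)) (r := R)).subset ?_
      rintro x ⟨n, hn⟩
      have : u n = x := ι.injective hn
      simpa [← this] using hu n
    · intro ξ _
      obtain ⟨x, hx⟩ := hrefl (WeakDual.toStrongDual ξ)
      exact ⟨ι x, hx⟩
  let Y : Submodule ℝ X := (Submodule.span ℝ (range u)).topologicalClosure
  have hYsep : TopologicalSpace.IsSeparable (Y : Set X) := by
    rw [Submodule.topologicalClosure_coe]
    exact ((countable_range u).isSeparable.span).closure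
  have hSY : closure S ⊆ ι '' (Y : Set X) := by
    have hY : ι '' (Y : Set X) = closure (ι '' (Y : Set X)) := by
      have := Convex.toWeakSpace_closure ℝ (Y.convex)
      rwa [(Submodule.isClosed_topologicalClosure _).closure_eq] at this
    rw [hY]
    apply closure_mono
    rintro _ ⟨n, rfl⟩
    exact ⟨u n, Submodule.le_topologicalClosure _ (Submodule.subset_span ⟨n, rfl⟩), rfl⟩
  obtain ⟨D, hDc, hD⟩ := hYsep
  have hne : D.Nonempty := by
    by_contra h
    rw [not_nonempty_iff_eq_empty.mp h, closure_empty] at hD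
    exact hD Y.zero_mem
  obtain ⟨d, rfl⟩ := hDc.exists_eq_range hne
  choose g hg1 hg2 using fun n => exists_dual_vector'' ℝ (d n)
  have hsep : ∀ y ∈ Y, (∀ n, g n y = 0) → y = 0 := by
    intro y hy h0
    by_contra hyne
    have hpos : 0 < ‖y‖ := norm_pos_iff.mpr hyne
    obtain ⟨_, ⟨n, rfl⟩, hn⟩ := Metric.mem_closure_iff.mp (hD hy) (‖y‖ / 2) (by positivity)
    have h1 : ‖d n‖ = g n (d n - y) := by rw [map_sub, h0 n, hg2]; simp
    have h2 : g n (d n - y) ≤ ‖d n - y‖ :=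
      (le_abs_self _).trans (((g n).le_opNorm _).trans (mul_le_of_le_one_left (norm_nonneg _) (hg1 n)))
    have h3 : ‖y‖ ≤ ‖d n‖ + ‖d n - y‖ := by
      have := norm_sub_le (d n) (d n - y)
      simpa using this
    rw [dist_comm, dist_eq_norm] at hn
    linarith
  have : CompactSpace (closure S) := isCompact_iff_compactSpace.mp hS
  have : TopologicalSpace.MetrizableSpace (closure S) := by
    refine Metric.PiNatEmbed.TopologicalSpace.MetrizableSpace.of_countable_separating
      (fun n (k : closure S) => g n (ι.symm k)) (fun n => (hcont _).comp continuous_subtype_val) ?_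
    rintro ⟨a, ha⟩ ⟨b, hb⟩ hab
    by_contra hcon
    push Not at hcon
    obtain ⟨a', ha', rfl⟩ := hSY ha
    obtain ⟨b', hb', rfl⟩ := hSY hb
    have := hsep (a' - b') (Y.sub_mem ha' hb') (fun n => by
      have := hcon n
      simp only [LinearEquiv.symm_apply_apply] at this
      rw [map_sub, this, sub_self])
    exact hab (Subtype.ext (congrArg ι (sub_eq_zero.mp this)))
  let _ := TopologicalSpace.metrizableSpaceMetric (closure S)
  obtain ⟨a, ψ, hψ, hlim⟩ := CompactSpace.tendsto_subseq
    (fun n => (⟨ι (u n), subset_closure ⟨n, rfl⟩⟩ : closure S))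
  refine ⟨ι.symm a, ψ, hψ, fun φ => ?_⟩
  exact ((hcont φ).comp continuous_subtype_val).continuousAt.tendsto.comp hlim

theorem aux_min {X : Type*} [NormedAddCommGroup X] [NormedSpace ℝ X]
    (hrefl : Function.Surjective (inclusionInDoubleDual ℝ X)) (f : X → ℝ)
    (hlsc : ∀ (u : ℕ → X) (x : X),
      (∀ φ : StrongDual ℝ X, Tendsto (fun n => φ (u n)) atTop (𝓝 (φ x))) →
      ∀ b < f x, ∀ᶠ n in atTop, b < f (u n))
    (hcoer : Tendsto f (comap (fun x : X => ‖x‖) atTop) atTop) :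
    ∃ z, ∀ y, f z ≤ f y := by
  by_cases h0 : ∀ y, f 0 ≤ f y
  · exact ⟨0, h0⟩
  push Not at h0
  obtain ⟨y0, hy0⟩ := h0
  obtain ⟨v, -, hv, hvm⟩ := exists_seq_tendsto_sInf
    (S := range fun x => (f x : EReal)) ⟨_, mem_range_self 0⟩ (OrderBot.bddBelow _)
  choose u hu using hvm
  have hmle : ∀ y, sInf (range fun x => (f x : EReal)) ≤ f y := fun y => sInf_le ⟨y, rfl⟩
  have hlt : ∀ᶠ n in atTop, f (u n) < f 0 := by
    have : sInf (range fun x => (f x : EReal)) < (f 0 : EReal) :=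
      (hmle y0).trans_lt (by exact_mod_cast hy0)
    filter_upwards [hv.eventually_lt_const this] with n hn
    rw [← hu n] at hn
    dsimp only at hn
    exact_mod_cast hn
  obtain ⟨N, hN⟩ := eventually_atTop.mp hlt
  obtain ⟨R, hR⟩ : ∃ R : ℝ, ∀ x, R ≤ ‖x‖ → f 0 ≤ f x := by
    have := hcoer.eventually_ge_atTop (f 0)
    rw [eventually_comap] at this
    obtain ⟨R, hR⟩ := eventually_atTop.mp this
    exact ⟨R, fun x hx => hR _ hx x rfl⟩
  obtain ⟨z, ψ, hψ, hz⟩ := aux_weak_subseq hrefl (fun n => u (n + N)) R (by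
    intro n
    by_contra hcon
    exact absurd (hN (n + N) (by omega)) (not_lt.mpr (hR _ (not_le.mp hcon).le)))
  refine ⟨z, fun y => ?_⟩
  by_contra hcon
  push Not at hcon
  have hev := hlsc _ z hz ((f y + f z) / 2) (by linarith)
  have hlim : Tendsto (fun n => v (ψ n + N)) atTop (𝓝 (sInf (range fun x => (f x : EReal)))) :=
    hv.comp ((tendsto_add_atTop_nat N).comp hψ.tendsto_atTop)
  have : (((f y + f z) / 2 : ℝ) : EReal) ≤ sInf (range fun x => (f x : EReal)) := by
    refine ge_of_tendsto hlim ?_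
    filter_upwards [hev] with n hn
    rw [← hu]
    dsimp only
    exact_mod_cast hn.le
  have h2 := this.trans (hmle y)
  have h3 : (f y + f z) / 2 ≤ f y := by exact_mod_cast h2
  linarith

/-- Theorem 2 (first part): under the assumptions of Theorem 1, if moreover there is a closed
σ-compact set `B ⊂ X` such that the restriction of `T` to `X \ B` is of class `C¹`, then the
set of points `x ∈ X \ B` at which the Fréchet derivative `T'(x) ∈ L(X, X*)` is not
invertible is not σ-compact. -/
theorem tilde_singular_set_not_sigmaCompact
    {X : Type*} [NormedAddCommGroup X] [NormedSpace ℝ X] [CompleteSpace X]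
    (hdim : ¬ FiniteDimensional ℝ X)
    (hrefl : Function.Surjective (inclusionInDoubleDual ℝ X))
    (T : X → StrongDual ℝ X)
    (hTcont : Continuous T)
    (JT : X → ℝ)
    (hJT : JT = fun x => ∫ s in (0:ℝ)..1, T (s • x) x)
    (hpot : ∀ x : X, HasFDerivAt JT (T x) x)
    (hclosed : ∀ C : Set X, IsClosed C → IsClosed (T '' C))
    (hnmono : ¬ ∀ x y : X, 0 ≤ (T x - T y) (x - y))
    (hswlsc : ∀ (u : ℕ → X) (x : X),
      (∀ φ : StrongDual ℝ X, Tendsto (fun n => φ (u n)) atTop (𝓝 (φ x))) →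
      ∀ b < JT x, ∀ᶠ n in atTop, b < JT (u n))
    (hcoer : ∀ φ : StrongDual ℝ X,
      Tendsto (fun x => JT x + φ x) (comap (fun x : X => ‖x‖) atTop) atTop)
    (B : Set X) (hBclosed : IsClosed B) (hBσ : IsSigmaCompact B)
    (hTC1 : ContDiffOn ℝ 1 T Bᶜ) :
    ¬ IsSigmaCompact {x : X | x ∉ B ∧
      ¬ ∃ e : X ≃L[ℝ] StrongDual ℝ X, (e : X →L[ℝ] StrongDual ℝ X) = fderiv ℝ T x} := by
  intro hσ
  set S₀ : Set X := {x : X | x ∉ B ∧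
      ¬ ∃ e : X ≃L[ℝ] StrongDual ℝ X, (e : X →L[ℝ] StrongDual ℝ X) = fderiv ℝ T x} with hS₀
  have hXfin : ¬ FiniteDimensional ℝ (StrongDual ℝ X) := by
    intro hfin
    exact hdim (FiniteDimensional.of_injective
      (inclusionInDoubleDualLi (𝕜 := ℝ) (E := X)).toLinearMap
      (inclusionInDoubleDualLi (𝕜 := ℝ) (E := X)).injective)
  -- the full singular set
  have hS : IsSigmaCompact (B ∪ S₀) := by
    rw [union_eq_iUnion]
    exact isSigmaCompact_iUnion _ (by rintro (_ | _) <;> simpa)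
  -- at regular points there is an invertible strict derivative
  have hreg : ∀ x ∉ B ∪ S₀, ∃ e : X ≃L[ℝ] StrongDual ℝ X,
      HasStrictFDerivAt T (e : X →L[ℝ] StrongDual ℝ X) x := by
    intro x hx
    have hxB : x ∉ B := fun h => hx (Or.inl h)
    obtain ⟨e, he⟩ : ∃ e : X ≃L[ℝ] StrongDual ℝ X,
        (e : X →L[ℝ] StrongDual ℝ X) = fderiv ℝ T x := by
      by_contra h
      exact hx (Or.inr ⟨hxB, h⟩)
    have hca : ContDiffAt ℝ 1 T x := hTC1.contDiffAt (hBclosed.isOpen_compl.mem_nhds hxB)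
    exact ⟨e, he ▸ hca.hasStrictFDerivAt one_ne_zero⟩
  have hfib : ∀ y, IsCompact (T ⁻¹' {y}) := by
    intro y
    refine aux_fiber_compact T hTcont hclosed y ?_
    by_contra hne
    obtain ⟨x, hxi, hxS⟩ := (aux_dense_compl hdim hS).inter_open_nonempty _ isOpen_interior
      (nonempty_iff_ne_empty.mpr hne)
    obtain ⟨e, he⟩ := hreg x hxS
    have hconst : T =ᶠ[𝓝 x] fun _ => y := mem_interior_iff_mem_nhds.mp hxi
    have h0 : (e : X →L[ℝ] StrongDual ℝ X) = 0 :=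
      he.hasFDerivAt.unique ((hasFDerivAt_const y x).congr_of_eventuallyEq hconst)
    have : Subsingleton X := by
      refine ⟨fun a b => e.injective ?_⟩
      have h1 := DFunLike.congr_fun h0 a
      have h2 := DFunLike.congr_fun h0 b
      exact h1.trans h2.symm
    exact hdim inferInstance
  have hproper : IsProperMap T :=
    isProperMap_iff_isClosedMap_and_compact_fibers.mpr ⟨hTcont, fun C hC => hclosed C hC, hfib⟩
  set K := T '' (B ∪ S₀) with hKdef
  have hK : IsSigmaCompact K := hS.image hTcont
  have hKX : IsSigmaCompact (T ⁻¹' K) := by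
    obtain ⟨C, hC, hCK⟩ := hK
    rw [← hCK, preimage_iUnion]
    exact isSigmaCompact_iUnion_of_isCompact _ fun n => hproper.isCompact_preimage (hC n)
  have hloc : IsLocalHomeomorphOn T (T ⁻¹' Kᶜ) := by
    intro x hx
    obtain ⟨e, he⟩ := hreg x fun h => hx (mem_image_of_mem T h)
    exact ⟨he.toOpenPartialHomeomorph T, he.mem_toOpenPartialHomeomorph_source, rfl⟩
  have hcov : IsCoveringMapOn T Kᶜ := by
    refine IsClosedMap.isCoveringMapOn_of_isLocalHomeomorphOn (fun C hC => hclosed C hC) ?_ hloc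
    intro y hy
    refine (hfib y).finite (.of_openPartialHomeomorph T subset_rfl ?_)
    rintro x rfl
    obtain ⟨φ, hφ, h⟩ := hloc x hy
    exact ⟨φ, hφ, h.symm⟩
  have hinj : ∀ x y, T x ∉ K → T x = T y → x = y := fun x y hx hxy =>
    aux_covering_inj hdim hXfin T hTcont hK hKX hcov hx hxy
  have hJc : Continuous JT := continuous_iff_continuousAt.mpr fun x => (hpot x).continuousAt
  have hsub : ∀ x ∈ (T ⁻¹' K)ᶜ, ∀ y, JT x + T x (y - x) ≤ JT y := by
    intro x hx y
    obtain ⟨z, hz⟩ := aux_min hrefl (fun w => JT w + (-T x) w) (by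
      intro u w hu b hb
      have h1 : Tendsto (fun n => T x (u n)) atTop (𝓝 (T x w)) := hu (T x)
      have hb' : b + T x w < JT w := by
        simp only [neg_apply] at hb
        linarith
      obtain ⟨c, hc1, hc2⟩ := exists_between hb'
      filter_upwards [hswlsc u w hu c hc2,
        h1.eventually_lt_const (show T x w < c - b by linarith)] with n h2 h3
      simp only [neg_apply]
      linarith) (hcoer (-T x))
    have hTz : T z = T x := by
      have hmin : IsLocalMin (fun w => JT w + (-T x) w) z := Eventually.of_forall hz
      have h0 := hmin.hasFDerivAt_eq_zero ((hpot z).add (-T x).hasFDerivAt)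
      rwa [← sub_eq_add_neg, sub_eq_zero] at h0
    have hzx : x = z := hinj x z hx hTz.symm
    have := hz y
    rw [← hzx] at this
    simp only [neg_apply] at this
    rw [map_sub]
    linarith
  have hall : ∀ x y, JT x + T x (y - x) ≤ JT y := by
    intro x y
    have hcl : IsClosed {x | JT x + T x (y - x) ≤ JT y} :=
      isClosed_le (hJc.add (hTcont.clm_apply (by fun_prop))) continuous_const
    have hss : (T ⁻¹' K)ᶜ ⊆ {x | JT x + T x (y - x) ≤ JT y} := fun x hx => hsub x hx y
    exact closure_minimal hss hcl (aux_dense_compl hdim hKX x)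
  refine hnmono fun x y => ?_
  have h1 := hall x y
  have h2 := hall y x
  simp only [map_sub, sub_apply] at h1 h2 ⊢
  linarith
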